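/- Let T, E₁, E₂ : ℝ × ℝ → ℝ³ and k₁, k₂ : ℝ × ℝ → ℝ be smooth with (T, E₁, E₂) pairwise ⟨·,·⟩_L-orthogonal, ⟨T,T⟩_L = ⟨E₁,E₁⟩_L = 1, ⟨E₂,E₂⟩_L = −1, satisfying Tₛ = k₁E₁ + k₂E₂, (E₁)ₛ = −k₁T, (E₂)ₛ = k₂T and T_t = (k₂)ₛE₁ + (k₁)ₛE₂, (E₁)_t = −(k₂)ₛT − ½(k₁² − k₂²)E₂, (E₂)_t = (k₁)ₛT − ½(k₁² − k₂²)E₁. Then the principal curvatures evolve according to (k₁)_t = (k₂)ₛₛ + ½(k₁² − k₂²)k₂ and (k₂)_t = (k₁)ₛₛ + ½(k₁² − k₂²)k₁. -/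

import Mathlib

noncomputable section

open Real

/-- Minkowski 3-space: ℝ³ as a vector type. -/
abbrev V3 : Type := Fin 3 → ℝ

/-- Lorentzian inner product ⟨x,y⟩_L = −x₁y₁ + x₂y₂ + x₃y₃ on ℝ³. -/
def lor (x y : V3) : ℝ := -(x 0 * y 0) + x 1 * y 1 + x 2 * y 2

/-- Lorentzian cross product x ×_L y = (x₃y₂ − x₂y₃, x₃y₁ − x₁y₃, x₁y₂ − x₂y₁). -/
def lcross (x y : V3) : V3 :=
  ![x 2 * y 1 - x 1 * y 2, x 2 * y 0 - x 0 * y 2, x 0 * y 1 - x 1 * y 0]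

/-- Partial derivative with respect to the first variable `s`. -/
def pds {E : Type*} [NormedAddCommGroup E] [NormedSpace ℝ E]
    (f : ℝ × ℝ → E) (p : ℝ × ℝ) : E := deriv (fun s => f (s, p.2)) p.1

/-- Partial derivative with respect to the second variable `t`. -/
def pdt {E : Type*} [NormedAddCommGroup E] [NormedSpace ℝ E]
    (f : ℝ × ℝ → E) (p : ℝ × ℝ) : E := deriv (fun t => f (p.1, t)) p.2

section helpers
variable {E : Type*} [NormedAddCommGroup E] [NormedSpace ℝ E]

lemma hds (f : ℝ × ℝ → E) (hf : Differentiable ℝ f) (p : ℝ × ℝ) :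
    HasDerivAt (fun s => f (s, p.2)) (fderiv ℝ f p (1, 0)) p.1 := by
  have h1 : HasDerivAt (fun s : ℝ => (s, p.2)) ((1 : ℝ), (0 : ℝ)) p.1 :=
    (hasDerivAt_id p.1).prodMk (hasDerivAt_const p.1 p.2)
  exact ((hf p).hasFDerivAt).comp_hasDerivAt p.1 h1

lemma hdt (f : ℝ × ℝ → E) (hf : Differentiable ℝ f) (p : ℝ × ℝ) :
    HasDerivAt (fun t => f (p.1, t)) (fderiv ℝ f p (0, 1)) p.2 := by
  have h1 : HasDerivAt (fun t : ℝ => (p.1, t)) ((0 : ℝ), (1 : ℝ)) p.2 :=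
    (hasDerivAt_const p.2 p.1).prodMk (hasDerivAt_id p.2)
  exact ((hf p).hasFDerivAt).comp_hasDerivAt p.2 h1

lemma pds_eq (f : ℝ × ℝ → E) (hf : Differentiable ℝ f) :
    pds f = fun p => fderiv ℝ f p (1, 0) := by
  funext p; exact (hds f hf p).deriv

lemma pdt_eq (f : ℝ × ℝ → E) (hf : Differentiable ℝ f) :
    pdt f = fun p => fderiv ℝ f p (0, 1) := by
  funext p; exact (hdt f hf p).deriv

lemma two_le_smooth : (2 : WithTop ℕ∞) ≤ ((⊤ : ℕ∞) : WithTop ℕ∞) := by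
  have h : ((2 : ℕ∞) : WithTop ℕ∞) ≤ ((⊤ : ℕ∞) : WithTop ℕ∞) := WithTop.coe_le_coe.2 le_top
  exact h

lemma diff_of (f : ℝ × ℝ → E) (hf : ContDiff ℝ (⊤ : ℕ∞) f) : Differentiable ℝ f :=
  hf.differentiable (by simp)

lemma diff_fderiv (f : ℝ × ℝ → E) (hf : ContDiff ℝ (⊤ : ℕ∞) f) :
    Differentiable ℝ (fderiv ℝ f) :=
  (hf.fderiv_right (m := 1) (by rw [one_add_one_eq_two]; exact two_le_smooth)).differentiable (by simp)

lemma diff_pds (f : ℝ × ℝ → E) (hf : ContDiff ℝ (⊤ : ℕ∞) f) : Differentiable ℝ (pds f) := by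
  rw [pds_eq f (diff_of f hf)]
  exact (diff_fderiv f hf).clm_apply (differentiable_const _)

lemma diff_pdt (f : ℝ × ℝ → E) (hf : ContDiff ℝ (⊤ : ℕ∞) f) : Differentiable ℝ (pdt f) := by
  rw [pdt_eq f (diff_of f hf)]
  exact (diff_fderiv f hf).clm_apply (differentiable_const _)

lemma pd_comm (f : ℝ × ℝ → E) (hf : ContDiff ℝ (⊤ : ℕ∞) f) (p : ℝ × ℝ) :
    pdt (pds f) p = pds (pdt f) p := by
  have hsym : IsSymmSndFDerivAt ℝ f p :=
    hf.contDiffAt.isSymmSndFDerivAt (by simpa using two_le_smooth)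
  have key : ∀ v w : ℝ × ℝ,
      fderiv ℝ (fun q => fderiv ℝ f q v) p w = fderiv ℝ (fderiv ℝ f) p w v := by
    intro v w
    rw [fderiv_clm_apply ((diff_fderiv f hf) p) (differentiableAt_const v)]
    simp
  rw [pdt_eq _ (diff_pds f hf), pds_eq _ (diff_pdt f hf), pds_eq f (diff_of f hf),
    pdt_eq f (diff_of f hf)]
  simp only [key]
  exact hsym _ _

lemma hds' (f : ℝ × ℝ → E) (hf : Differentiable ℝ f) (p : ℝ × ℝ) :
    HasDerivAt (fun s => f (s, p.2)) (pds f p) p.1 := by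
  rw [pds_eq f hf]; exact hds f hf p

lemma hdt' (f : ℝ × ℝ → E) (hf : Differentiable ℝ f) (p : ℝ × ℝ) :
    HasDerivAt (fun t => f (p.1, t)) (pdt f p) p.2 := by
  rw [pdt_eq f hf]; exact hdt f hf p

lemma pds_comb (a b : ℝ × ℝ → ℝ) (X Y : ℝ × ℝ → E) (ha : Differentiable ℝ a)
    (hb : Differentiable ℝ b) (hX : Differentiable ℝ X) (hY : Differentiable ℝ Y) (p : ℝ × ℝ) :
    pds (fun q => a q • X q + b q • Y q) p =
      (a p • pds X p + pds a p • X p) + (b p • pds Y p + pds b p • Y p) :=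
  (((hds' a ha p).smul (hds' X hX p)).add ((hds' b hb p).smul (hds' Y hY p))).deriv

lemma pdt_comb (a b : ℝ × ℝ → ℝ) (X Y : ℝ × ℝ → E) (ha : Differentiable ℝ a)
    (hb : Differentiable ℝ b) (hX : Differentiable ℝ X) (hY : Differentiable ℝ Y) (p : ℝ × ℝ) :
    pdt (fun q => a q • X q + b q • Y q) p =
      (a p • pdt X p + pdt a p • X p) + (b p • pdt Y p + pdt b p • Y p) :=
  (((hdt' a ha p).smul (hdt' X hX p)).add ((hdt' b hb p).smul (hdt' Y hY p))).deriv

end helpers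

lemma frame_indep (X Y : V3) (a b : ℝ) (hX : lor X X = 1) (hY : lor Y Y = -1)
    (hXY : lor X Y = 0) (h : a • X + b • Y = 0) : a = 0 ∧ b = 0 := by
  have h0 := congrFun h 0
  have h1 := congrFun h 1
  have h2 := congrFun h 2
  simp only [Pi.add_apply, Pi.smul_apply, smul_eq_mul, Pi.zero_apply] at h0 h1 h2
  unfold lor at hX hY hXY
  constructor
  · linear_combination -a * hX - b * hXY - X 0 * h0 + X 1 * h1 + X 2 * h2
  · linear_combination a * hXY + b * hY + Y 0 * h0 - Y 1 * h1 - Y 2 * h2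

/-- For a parallel frame `(T,E₁,E₂)` of signature `(+,+,−)` with
the stated `s`- and `t`-evolution equations (with `u = −½(k₁² − k₂²)`), the principal
curvatures evolve by `(k₁)_t = (k₂)ₛₛ + ½(k₁² − k₂²)k₂` and
`(k₂)_t = (k₁)ₛₛ + ½(k₁² − k₂²)k₁`. -/
theorem statement18 (T E₁ E₂ : ℝ × ℝ → V3) (k₁ k₂ : ℝ × ℝ → ℝ)
    (hT : ContDiff ℝ (⊤ : ℕ∞) T) (hE₁ : ContDiff ℝ (⊤ : ℕ∞) E₁) (hE₂ : ContDiff ℝ (⊤ : ℕ∞) E₂)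
    (hk₁ : ContDiff ℝ (⊤ : ℕ∞) k₁) (hk₂ : ContDiff ℝ (⊤ : ℕ∞) k₂)
    (hTT : ∀ p, lor (T p) (T p) = 1)
    (hE₁E₁ : ∀ p, lor (E₁ p) (E₁ p) = 1)
    (hE₂E₂ : ∀ p, lor (E₂ p) (E₂ p) = -1)
    (hTE₁ : ∀ p, lor (T p) (E₁ p) = 0)
    (hTE₂ : ∀ p, lor (T p) (E₂ p) = 0)
    (hE₁E₂ : ∀ p, lor (E₁ p) (E₂ p) = 0)
    (hTs : ∀ p, pds T p = k₁ p • E₁ p + k₂ p • E₂ p)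
    (hE₁s : ∀ p, pds E₁ p = -(k₁ p) • T p)
    (hE₂s : ∀ p, pds E₂ p = k₂ p • T p)
    (hTt : ∀ p, pdt T p = (pds k₂ p) • E₁ p + (pds k₁ p) • E₂ p)
    (hE₁t : ∀ p, pdt E₁ p = -(pds k₂ p) • T p - ((k₁ p ^ 2 - k₂ p ^ 2) / 2) • E₂ p)
    (hE₂t : ∀ p, pdt E₂ p = (pds k₁ p) • T p - ((k₁ p ^ 2 - k₂ p ^ 2) / 2) • E₁ p) :
    (∀ p, pdt k₁ p = pds (pds k₂) p + (k₁ p ^ 2 - k₂ p ^ 2) / 2 * k₂ p) ∧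
    (∀ p, pdt k₂ p = pds (pds k₁) p + (k₁ p ^ 2 - k₂ p ^ 2) / 2 * k₁ p) := by
  have main : ∀ p, pdt k₁ p - (pds (pds k₂) p + (k₁ p ^ 2 - k₂ p ^ 2) / 2 * k₂ p) = 0 ∧
      pdt k₂ p - (pds (pds k₁) p + (k₁ p ^ 2 - k₂ p ^ 2) / 2 * k₁ p) = 0 := by
    intro p
    have hc := pd_comm T hT p
    rw [show pds T = _ from funext hTs, show pdt T = _ from funext hTt,
      pdt_comb k₁ k₂ E₁ E₂ (diff_of _ hk₁) (diff_of _ hk₂) (diff_of _ hE₁) (diff_of _ hE₂),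
      pds_comb (pds k₂) (pds k₁) E₁ E₂ (diff_pds _ hk₂) (diff_pds _ hk₁) (diff_of _ hE₁)
        (diff_of _ hE₂), hE₁s, hE₂s, hE₁t, hE₂t] at hc
    apply frame_indep (E₁ p) (E₂ p) _ _ (hE₁E₁ p) (hE₂E₂ p) (hE₁E₂ p)
    rw [← sub_eq_zero] at hc
    rw [← hc]
    module
  exact ⟨fun p => sub_eq_zero.mp (main p).1, fun p => sub_eq_zero.mp (main p).2⟩
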